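/- arXiv:2102.08045 — 5 statements merged into one kernel-verified Lean document; each statement's English description precedes it below -/
import Mathlib

section
/- Let α > 0. There exists a constant C > 0, depending only on α, such that for every ε > 0 with αε ≤ 1/2 the following holds. Set k = √(3α/4), c = 1/√(1−αε), ζ₁(t,x) = α·sech²(k(x−ct)) and v₁(t,x) = c·ζ₁(t,x)/(1 + ε·ζ₁(t,x)). Then for all (t,x) ∈ ℝ²: |∂_t v₁ − (ε/3)·∂_x²∂_t v₁ + ∂_x ζ₁ + ε·v₁·∂_x v₁| ≤ C·ε². -/
/-- Partial derivative with respect to the first (time) variable. -/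
noncomputable def pt (u : ℝ → ℝ → ℝ) : ℝ → ℝ → ℝ := fun t x => deriv (fun s => u s x) t

/-- Partial derivative with respect to the second (space) variable. -/
noncomputable def px (u : ℝ → ℝ → ℝ) : ℝ → ℝ → ℝ := fun t x => deriv (fun y => u t y) x

/-- Profile `1 / (cosh² + b)`. -/
noncomputable def profF (b θ : ℝ) : ℝ := 1 / (Real.cosh θ ^ 2 + b)

/-- First derivative of the profile. -/
noncomputable def profG (b θ : ℝ) : ℝ := -(2 * Real.sinh θ * Real.cosh θ) * profF b θ ^ 2

/-- Second derivative of the profile. -/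
noncomputable def profH (b θ : ℝ) : ℝ :=
  4 * profF b θ - 6 * (2 * b + 1) * profF b θ ^ 2 + 8 * b * (b + 1) * profF b θ ^ 3

/-- Third derivative of the profile. -/
noncomputable def profK (b θ : ℝ) : ℝ :=
  profG b θ * (4 - 12 * (2 * b + 1) * profF b θ + 24 * b * (b + 1) * profF b θ ^ 2)

lemma prof_pos {b : ℝ} (hb : 0 ≤ b) (θ : ℝ) : 0 < Real.cosh θ ^ 2 + b := by
  have := Real.cosh_pos θ
  positivity

lemma hasDeriv_profF {b : ℝ} (hb : 0 ≤ b) (θ : ℝ) : HasDerivAt (profF b) (profG b θ) θ := by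
  have hD := (prof_pos hb θ).ne'
  have h1 : HasDerivAt (fun θ => Real.cosh θ ^ 2 + b) (2 * Real.cosh θ * Real.sinh θ) θ := by
    simpa using ((Real.hasDerivAt_cosh θ).pow 2).add_const b
  have h2 := h1.inv hD
  have h3 : profF b = (fun θ => Real.cosh θ ^ 2 + b)⁻¹ := by
    funext y; simp [profF]
  rw [h3]
  refine h2.congr_deriv ?_
  unfold profG profF
  field_simp

lemma hasDeriv_profG {b : ℝ} (hb : 0 ≤ b) (θ : ℝ) : HasDerivAt (profG b) (profH b θ) θ := by
  have hD := (prof_pos hb θ).ne'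
  have h1 := (((Real.hasDerivAt_sinh θ).const_mul 2).mul (Real.hasDerivAt_cosh θ)).neg.mul
    ((hasDeriv_profF hb θ).pow 2)
  have h3 : profG b = (-((fun y => 2 * Real.sinh y) * Real.cosh)) * (profF b ^ 2) := by
    funext y; simp [profG]
  rw [h3]
  refine h1.congr_deriv ?_
  have hs : Real.sinh θ ^ 2 = Real.cosh θ ^ 2 - 1 := Real.sinh_sq θ
  simp only [profH, profG, profF, Pi.neg_apply, Pi.mul_apply, Pi.pow_apply, Nat.reduceSub, pow_one,
    Nat.cast_ofNat]
  generalize Real.sinh θ = s at *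
  generalize Real.cosh θ = q at *
  field_simp
  ring_nf
  simp only [hs]
  ring

lemma hasDeriv_profH {b : ℝ} (hb : 0 ≤ b) (θ : ℝ) : HasDerivAt (profH b) (profK b θ) θ := by
  have hF := hasDeriv_profF hb θ
  have h1 := ((hF.const_mul 4).sub ((hF.pow 2).const_mul (6 * (2 * b + 1)))).add
    ((hF.pow 3).const_mul (8 * b * (b + 1)))
  refine (h1.congr_deriv ?_)
  simp only [profK]
  push_cast
  ring

lemma chain_x {f : ℝ → ℝ} {f' : ℝ} (A k c t x : ℝ) (h : HasDerivAt f f' (k * (x - c * t))) :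
    deriv (fun y => A * f (k * (y - c * t))) x = A * k * f' := by
  have h1 : HasDerivAt (fun y => k * (y - c * t)) k x := by
    simpa using ((hasDerivAt_id x).sub_const (c * t)).const_mul k
  refine ((HasDerivAt.comp x h h1).const_mul A).deriv.trans ?_
  ring

lemma chain_t {f : ℝ → ℝ} {f' : ℝ} (A k c t x : ℝ) (h : HasDerivAt f f' (k * (x - c * t))) :
    deriv (fun s => A * f (k * (x - c * s))) t = -(A * k * c) * f' := by
  have h1 : HasDerivAt (fun s => k * (x - c * s)) (-(k * c)) t := by
    simpa using (((hasDerivAt_id t).const_mul c).const_sub x).const_mul k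
  refine ((HasDerivAt.comp t h h1).const_mul A).deriv.trans ?_
  ring

lemma prof_identity {b : ℝ} (hb : 0 ≤ b) (θ : ℝ) :
    -profG b θ + b / 4 * profK b θ + (1 - b) * profG 0 θ + b * profF b θ * profG b θ
      = -(2 * Real.sinh θ * Real.cosh θ) * b ^ 2 * profF 0 θ *
        (2 * profF b θ ^ 3 - 2 * profF b θ ^ 2 + (1 - b) * (profF 0 θ * profF b θ ^ 2)
          - 6 * (Real.cosh θ ^ 2 * profF b θ ^ 3)
          + 6 * (b + 1) * (Real.cosh θ ^ 2 * profF b θ * profF b θ ^ 3)) := by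
  have hD := (prof_pos hb θ).ne'
  have hc := (Real.cosh_pos θ).ne'
  simp only [profK, profG, profF, add_zero]
  field_simp
  ring

lemma prof_bound {b : ℝ} (hb : 0 ≤ b) (hb2 : b ≤ 1 / 2) (θ : ℝ) :
    |-profG b θ + b / 4 * profK b θ + (1 - b) * profG 0 θ + b * profF b θ * profG b θ|
      ≤ 40 * b ^ 2 := by
  rw [prof_identity hb]
  have hc := Real.one_le_cosh θ
  have hq : 1 ≤ Real.cosh θ ^ 2 := one_le_pow₀ hc
  have hD := prof_pos hb θ
  have hf0 : 0 ≤ profF b θ := by unfold profF; positivity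
  have hf1 : profF b θ ≤ 1 := by
    unfold profF; rw [div_le_one hD]; linarith
  have hg0 : 0 ≤ profF 0 θ := by unfold profF; positivity
  have hg1 : profF 0 θ ≤ 1 := by
    unfold profF; rw [div_le_one (by linarith)]; linarith
  have hqf : Real.cosh θ ^ 2 * profF b θ ≤ 1 := by
    unfold profF; rw [mul_one_div, div_le_one hD]; linarith
  have hqf0 : 0 ≤ Real.cosh θ ^ 2 * profF b θ := by positivity
  have hqg : Real.cosh θ ^ 2 * profF 0 θ = 1 := by
    unfold profF; rw [add_zero]; field_simp
  have hs : |Real.sinh θ| ≤ Real.cosh θ := by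
    apply abs_le_of_sq_le_sq _ (by linarith)
    rw [Real.sinh_sq]; linarith
  have h1 : |-(2 * Real.sinh θ * Real.cosh θ) * b ^ 2 * profF 0 θ| ≤ 2 * b ^ 2 := by
    rw [abs_mul, abs_mul, abs_neg, abs_mul, abs_mul, abs_of_nonneg hg0, abs_of_nonneg (sq_nonneg b),
      abs_of_nonneg (by linarith : 0 ≤ Real.cosh θ), abs_two]
    calc 2 * |Real.sinh θ| * Real.cosh θ * b ^ 2 * profF 0 θ
        ≤ 2 * Real.cosh θ * Real.cosh θ * b ^ 2 * profF 0 θ := by gcongr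
      _ = 2 * b ^ 2 * (Real.cosh θ ^ 2 * profF 0 θ) := by ring
      _ = 2 * b ^ 2 := by rw [hqg, mul_one]
  have e2 : profF b θ ^ 2 ≤ 1 := pow_le_one₀ hf0 hf1
  have e3 : profF b θ ^ 3 ≤ 1 := pow_le_one₀ hf0 hf1
  have p2 : 0 ≤ profF b θ ^ 2 := by positivity
  have p3 : 0 ≤ profF b θ ^ 3 := by positivity
  have a0 : 0 ≤ (1 - b) * (profF 0 θ * profF b θ ^ 2) :=
    mul_nonneg (by linarith) (by positivity)
  have a1 : (1 - b) * (profF 0 θ * profF b θ ^ 2) ≤ 1 :=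
    mul_le_one₀ (by linarith) (by positivity) (mul_le_one₀ hg1 p2 e2)
  have c0 : 0 ≤ Real.cosh θ ^ 2 * profF b θ ^ 3 := by positivity
  have c1 : Real.cosh θ ^ 2 * profF b θ ^ 3 ≤ 1 := by
    have := mul_le_one₀ hqf p2 e2
    nlinarith
  have d0 : 0 ≤ 6 * (b + 1) * (Real.cosh θ ^ 2 * profF b θ * profF b θ ^ 3) := by positivity
  have d1 : 6 * (b + 1) * (Real.cosh θ ^ 2 * profF b θ * profF b θ ^ 3) ≤ 9 := by
    have := mul_le_one₀ hqf p3 e3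
    have := mul_le_mul_of_nonneg_left this (by positivity : 0 ≤ 6 * (b + 1))
    linarith
  rw [abs_mul]
  calc _ ≤ 2 * b ^ 2 * 20 := by
        gcongr
        rw [abs_le]
        constructor <;> linarith
    _ = 40 * b ^ 2 := by ring

theorem boussinesq_solitary_momentum_equation (α : ℝ) (hα : 0 < α) :
    ∃ C > (0:ℝ), ∀ ε : ℝ, 0 < ε → α * ε ≤ 1 / 2 →
      let k : ℝ := Real.sqrt (3 * α / 4)
      let c : ℝ := 1 / Real.sqrt (1 - α * ε)
      let ζ₁ : ℝ → ℝ → ℝ := fun t x => α * (1 / Real.cosh (k * (x - c * t))) ^ 2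
      let v₁ : ℝ → ℝ → ℝ := fun t x => c * ζ₁ t x / (1 + ε * ζ₁ t x)
      ∀ t x : ℝ,
        |pt v₁ t x - ε / 3 * px (px (pt v₁)) t x + px ζ₁ t x
          + ε * v₁ t x * px v₁ t x| ≤ C * ε ^ 2 := by
  have hk0 : 0 < Real.sqrt (3 * α / 4) := Real.sqrt_pos.mpr (by positivity)
  refine ⟨80 * α ^ 3 * Real.sqrt (3 * α / 4), by positivity, ?_⟩
  intro ε hε hb k c ζ₁ v₁ t x
  have hk : 0 < k := hk0
  have hk2 : k ^ 2 = 3 * α / 4 := Real.sq_sqrt (by positivity)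
  have hc2 : c ^ 2 * (1 - α * ε) = 1 := by
    have h : 0 < 1 - α * ε := by linarith
    simp only [c]
    rw [div_pow, Real.sq_sqrt h.le]
    field_simp
  have hb0 : 0 ≤ α * ε := by positivity
  have hζ : ζ₁ = fun t x => α * profF 0 (k * (x - c * t)) := by
    funext t x
    simp [ζ₁, profF]
  have hv : v₁ = fun t x => (c * α) * profF (α * ε) (k * (x - c * t)) := by
    funext t x
    have := prof_pos hb0 (k * (x - c * t))
    have h2 := Real.cosh_pos (k * (x - c * t))
    simp only [v₁, ζ₁, profF]
    have h3 : 1 + ε * (α * (1 / Real.cosh (k * (x - c * t))) ^ 2)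
        = (Real.cosh (k * (x - c * t)) ^ 2 + α * ε) / Real.cosh (k * (x - c * t)) ^ 2 := by
      field_simp
    rw [h3]
    field_simp
  clear_value ζ₁ v₁
  subst hζ hv
  have e1 : pt (fun t x => (c * α) * profF (α * ε) (k * (x - c * t)))
      = fun t x => (-(c * α * k * c)) * profG (α * ε) (k * (x - c * t)) := by
    funext t x
    exact chain_t _ _ _ _ _ (hasDeriv_profF hb0 _)
  have e2 : px (fun t x => (-(c * α * k * c)) * profG (α * ε) (k * (x - c * t)))
      = fun t x => (-(c * α * k * c) * k) * profH (α * ε) (k * (x - c * t)) := by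
    funext t x
    exact chain_x _ _ _ _ _ (hasDeriv_profG hb0 _)
  have e3 : px (fun t x => (-(c * α * k * c) * k) * profH (α * ε) (k * (x - c * t)))
      = fun t x => (-(c * α * k * c) * k * k) * profK (α * ε) (k * (x - c * t)) := by
    funext t x
    exact chain_x _ _ _ _ _ (hasDeriv_profH hb0 _)
  have e4 : px (fun t x => (c * α) * profF (α * ε) (k * (x - c * t)))
      = fun t x => (c * α * k) * profG (α * ε) (k * (x - c * t)) := by
    funext t x
    exact chain_x _ _ _ _ _ (hasDeriv_profF hb0 _)
  have e5 : px (fun t x => α * profF 0 (k * (x - c * t)))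
      = fun t x => (α * k) * profG 0 (k * (x - c * t)) := by
    funext t x
    exact chain_x _ _ _ _ _ (hasDeriv_profF le_rfl _)
  rw [e1, e2, e3, e4, e5]
  have hB := prof_bound hb0 hb (k * (x - c * t))
  have hc3 : c ^ 2 ≤ 2 := by nlinarith [sq_nonneg c]
  change _ ≤ 80 * α ^ 3 * k * ε ^ 2
  beta_reduce
  generalize k * (x - c * t) = θ at *
  have key : -(c * α * k * c) * profG (α * ε) θ
      - ε / 3 * (-(c * α * k * c) * k * k * profK (α * ε) θ) + α * k * profG 0 θ
      + ε * (c * α * profF (α * ε) θ) * (c * α * k * profG (α * ε) θ)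
      = α * k * c ^ 2 * (-profG (α * ε) θ + α * ε / 4 * profK (α * ε) θ
        + (1 - α * ε) * profG 0 θ + α * ε * profF (α * ε) θ * profG (α * ε) θ) := by
    linear_combination (ε / 3 * α * k * c ^ 2 * profK (α * ε) θ) * hk2
      - (α * k * profG 0 θ) * hc2
  rw [key, abs_mul, abs_of_nonneg (by positivity : 0 ≤ α * k * c ^ 2)]
  calc α * k * c ^ 2 * _ ≤ α * k * 2 * (40 * (α * ε) ^ 2) := by gcongr
    _ = 80 * α ^ 3 * k * ε ^ 2 := by ring
end

section
/- Let ε > 0 and c ∈ ℝ, and let ζ : ℝ → ℝ be four times continuously differentiable with 1 + ε·ζ(x) > 0 for all x, and such that ζ(x), ζ'(x), ζ''(x), ζ'''(x) all tend to 0 as x → −∞. Suppose that for all x ∈ ℝ: ζ − c²·ζ·(2+εζ)/(2(1+εζ)²) = −(εc²/3)·ζ'' + (ε²c²/6)·(ζ')² + (ε²c²/3)·ζ·ζ'' − (ε²c²/45)·ζ''''. Then for all x ∈ ℝ: (ζ²/2)·(1 − c²/(1+εζ)) = (εc²/6)·(εζ−1)·(ζ')² − (ε²c²/45)·ζ'''·ζ'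 + (ε²c²/90)·(ζ'')². -/
open Filter

theorem integrated_solitary_wave_ode (ε c : ℝ) (hε : 0 < ε) (ζ : ℝ → ℝ)
    (hζ : ContDiff ℝ 4 ζ)
    (hpos : ∀ x : ℝ, 0 < 1 + ε * ζ x)
    (h0 : Tendsto ζ atBot (nhds 0))
    (h1 : Tendsto (deriv ζ) atBot (nhds 0))
    (h2 : Tendsto (deriv (deriv ζ)) atBot (nhds 0))
    (h3 : Tendsto (deriv (deriv (deriv ζ))) atBot (nhds 0))
    (hode : ∀ x : ℝ,
      ζ x - c ^ 2 * ζ x * (2 + ε * ζ x) / (2 * (1 + ε * ζ x) ^ 2)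
        = -(ε * c ^ 2 / 3) * deriv (deriv ζ) x
          + ε ^ 2 * c ^ 2 / 6 * (deriv ζ x) ^ 2
          + ε ^ 2 * c ^ 2 / 3 * ζ x * deriv (deriv ζ) x
          - ε ^ 2 * c ^ 2 / 45 * deriv (deriv (deriv (deriv ζ))) x) :
    ∀ x : ℝ,
      (ζ x) ^ 2 / 2 * (1 - c ^ 2 / (1 + ε * ζ x))
        = ε * c ^ 2 / 6 * (ε * ζ x - 1) * (deriv ζ x) ^ 2
          - ε ^ 2 * c ^ 2 / 45 * deriv (deriv (deriv ζ)) x * deriv ζ x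
          + ε ^ 2 * c ^ 2 / 90 * (deriv (deriv ζ) x) ^ 2 := by
  have d0 : ∀ x, HasDerivAt ζ (deriv ζ x) x := fun x =>
    (hζ.differentiable (by norm_num) x).hasDerivAt
  have c1 : ContDiff ℝ 3 (deriv ζ) :=
    (contDiff_succ_iff_deriv.1 (show ContDiff ℝ (3 + 1) ζ by
      convert hζ using 1; norm_num)).2.2
  have c2 : ContDiff ℝ 2 (deriv (deriv ζ)) :=
    (contDiff_succ_iff_deriv.1 (show ContDiff ℝ (2 + 1) (deriv ζ) by
      convert c1 using 1; norm_num)).2.2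
  have c3 : ContDiff ℝ 1 (deriv (deriv (deriv ζ))) :=
    (contDiff_succ_iff_deriv.1 (show ContDiff ℝ (1 + 1) (deriv (deriv ζ)) by
      convert c2 using 1; norm_num)).2.2
  have d1 : ∀ x, HasDerivAt (deriv ζ) (deriv (deriv ζ) x) x := fun x =>
    (c1.differentiable (by norm_num) x).hasDerivAt
  have d2 : ∀ x, HasDerivAt (deriv (deriv ζ)) (deriv (deriv (deriv ζ)) x) x := fun x =>
    (c2.differentiable (by norm_num) x).hasDerivAt
  have d3 : ∀ x, HasDerivAt (deriv (deriv (deriv ζ)))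
      (deriv (deriv (deriv (deriv ζ))) x) x := fun x =>
    (c3.differentiable (by norm_num) x).hasDerivAt
  generalize deriv (deriv (deriv (deriv ζ))) = z4 at *
  generalize deriv (deriv (deriv ζ)) = z3 at *
  generalize deriv (deriv ζ) = z2 at *
  generalize deriv ζ = z1 at *
  let G : ℝ → ℝ := fun x => (ζ x) ^ 2 / 2 * (1 - c ^ 2 / (1 + ε * ζ x))
        - (ε * c ^ 2 / 6 * (ε * ζ x - 1) * (z1 x) ^ 2
          - ε ^ 2 * c ^ 2 / 45 * z3 x * z1 x
          + ε ^ 2 * c ^ 2 / 90 * (z2 x) ^ 2)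
  have hG : ∀ x, HasDerivAt G 0 x := by
    intro x
    have hne : 1 + ε * ζ x ≠ 0 := (hpos x).ne'
    have hA := (((d0 x).pow 2).div_const 2).mul
      ((hasDerivAt_const x (1:ℝ)).sub
        ((hasDerivAt_const x (c ^ 2)).div (((d0 x).const_mul ε).const_add 1) hne))
    have hB := (((((d0 x).const_mul ε).sub_const 1).const_mul (ε * c ^ 2 / 6)).mul
      ((d1 x).pow 2)).sub (((d3 x).const_mul (ε ^ 2 * c ^ 2 / 45)).mul (d1 x)) |>.add
      (((d2 x).pow 2).const_mul (ε ^ 2 * c ^ 2 / 90))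
    refine (hA.sub hB).congr_deriv ?_
    have e := congrArg (fun t => z1 x * t) (hode x)
    simp only [Pi.pow_apply, Pi.sub_apply, Pi.div_apply, Nat.cast_ofNat] at e ⊢
    have e2 : ζ x - c ^ 2 * ζ x * (2 + ε * ζ x) / (2 * (1 + ε * ζ x) ^ 2)
      = ζ x * (1 - c ^ 2 / (1 + ε * ζ x)) +
        ζ x ^ 2 / 2 * (c ^ 2 * ε / (1 + ε * ζ x) ^ 2) := by
      obtain ⟨D, hD⟩ : ∃ D, D = 1 + ε * ζ x := ⟨_, rfl⟩
      rw [← hD] at hne ⊢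
      field_simp
      linear_combination (2 * ζ x * c ^ 2) * hD
    rw [e2] at e
    linear_combination e
  have hT : Tendsto G atBot (nhds 0) := by
    have hD : Tendsto (fun x => 1 + ε * ζ x) atBot (nhds (1 + ε * 0)) :=
      (h0.const_mul ε).const_add 1
    have := (((h0.pow 2).div_const 2).mul
      (((tendsto_const_nhds (x := c ^ 2)).div hD (by norm_num)).const_sub 1)).sub
      ((((((h0.const_mul ε).sub_const 1).const_mul (ε * c ^ 2 / 6)).mul (h1.pow 2)).sub
        ((h3.const_mul (ε ^ 2 * c ^ 2 / 45)).mul h1)).add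
        ((h2.pow 2).const_mul (ε ^ 2 * c ^ 2 / 90)))
    convert this using 2
    · rfl
    · norm_num
  intro x
  have hconst : ∀ y, G y = G x := fun y =>
    is_const_of_deriv_eq_zero (fun z => (hG z).differentiableAt) (fun z => (hG z).deriv) y x
  have hx : G x = 0 := by
    refine tendsto_nhds_unique ?_ hT
    rw [show G = fun _ => G x from funext hconst]
    exact tendsto_const_nhds
  exact sub_eq_zero.1 hx
end

section
/- Let ε > 0, let h : ℝ → ℝ be twice continuously differentiable with h(x) ≥ h_min for all x, where h_min > 0, and let f : ℝ → ℝ be four times continuously differentiable with compact support. Define (ℑf)(x) = h(x)·f(x) − (ε/3)·d/dx[h(x)³·f'(x)] + (ε²/45)·f''''(x). If ℑf = 0 identically on ℝ, then f = 0 identically on ℝ. -/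
theorem operator_I_injective (ε hmin : ℝ) (hε : 0 < ε) (hhmin : 0 < hmin)
    (h : ℝ → ℝ) (hh : ContDiff ℝ 2 h) (hhb : ∀ x : ℝ, hmin ≤ h x)
    (f : ℝ → ℝ) (hf : ContDiff ℝ 4 f) (hsupp : HasCompactSupport f)
    (hker : ∀ x : ℝ,
      h x * f x - ε / 3 * deriv (fun y => (h y) ^ 3 * deriv f y) x
        + ε ^ 2 / 45 * deriv (deriv (deriv (deriv f))) x = 0) :
    ∀ x : ℝ, f x = 0 := by
  have h1 : ContDiff ℝ 3 (deriv f) := by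
    have : ContDiff ℝ (3 + 1) f := by convert hf using 1; norm_num
    exact (contDiff_succ_iff_deriv.1 this).2.2
  have h2 : ContDiff ℝ 2 (deriv (deriv f)) := by
    have : ContDiff ℝ (2 + 1) (deriv f) := by convert h1 using 1; norm_num
    exact (contDiff_succ_iff_deriv.1 this).2.2
  have h3 : ContDiff ℝ 1 (deriv (deriv (deriv f))) := by
    have : ContDiff ℝ (1 + 1) (deriv (deriv f)) := by convert h2 using 1; norm_num
    exact (contDiff_succ_iff_deriv.1 this).2.2
  have d0 : ∀ x, HasDerivAt f (deriv f x) x := fun x =>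
    (hf.differentiable (by norm_num) x).hasDerivAt
  have d1 : ∀ x, HasDerivAt (deriv f) (deriv (deriv f) x) x := fun x =>
    (h1.differentiable (by norm_num) x).hasDerivAt
  have d2 : ∀ x, HasDerivAt (deriv (deriv f)) (deriv (deriv (deriv f)) x) x := fun x =>
    (h2.differentiable (by norm_num) x).hasDerivAt
  have d3 : ∀ x, HasDerivAt (deriv (deriv (deriv f)))
      (deriv (deriv (deriv (deriv f))) x) x := fun x =>
    (h3.differentiable (by norm_num) x).hasDerivAt
  have dh : ∀ x, HasDerivAt (fun y => (h y) ^ 3 * deriv f y)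
      (deriv (fun y => (h y) ^ 3 * deriv f y) x) x := fun x =>
    ((((hh.differentiable (by norm_num)).pow 3).mul
      (h1.differentiable (by norm_num))) x).hasDerivAt
  -- the flux whose derivative is the energy density
  let F : ℝ → ℝ := fun x => f x * (ε / 3 * (h x ^ 3 * deriv f x)
      - ε ^ 2 / 45 * deriv (deriv (deriv f)) x)
      + deriv f x * (ε ^ 2 / 45 * deriv (deriv f) x)
  have dF : ∀ x, HasDerivAt F (h x * f x ^ 2 + ε / 3 * h x ^ 3 * deriv f x ^ 2
      + ε ^ 2 / 45 * deriv (deriv f) x ^ 2) x := by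
    intro x
    have := ((d0 x).mul (((dh x).const_mul (ε / 3)).sub ((d3 x).const_mul (ε ^ 2 / 45)))).add
      ((d1 x).mul ((d2 x).const_mul (ε ^ 2 / 45)))
    refine this.congr_deriv ?_
    simp only [Pi.sub_apply]
    linear_combination (-f x) * hker x
  have hpos : ∀ x, 0 < h x := fun x => hhmin.trans_le (hhb x)
  have hmono : Monotone F := by
    apply monotone_of_deriv_nonneg (fun x => (dF x).differentiableAt)
    intro x
    rw [(dF x).deriv]
    have := hpos x
    positivity
  have hFs : HasCompactSupport F := by
    apply HasCompactSupport.add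
    · exact hsupp.mul_right
    · exact hsupp.deriv.mul_right
  have hlim : Filter.Tendsto F (Filter.cocompact ℝ) (nhds 0) := hFs.is_zero_at_infty
  rw [cocompact_eq_atBot_atTop, Filter.tendsto_sup] at hlim
  have hF0 : F = fun _ => 0 := by
    funext x
    exact le_antisymm (hmono.ge_of_tendsto hlim.2 x) (hmono.le_of_tendsto hlim.1 x)
  intro x
  have e := (dF x).deriv
  rw [hF0, deriv_const] at e
  have hx := hpos x
  have p1 : 0 ≤ ε / 3 * h x ^ 3 * deriv f x ^ 2 := by positivity
  have p2 : 0 ≤ ε ^ 2 / 45 * deriv (deriv f) x ^ 2 := by positivity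
  by_contra hne
  have p3 : 0 < h x * f x ^ 2 := by positivity
  linarith
end

section
/- Let 0 < ε ≤ 1 and let h : ℝ → ℝ be twice continuously differentiable with 0 < h_min ≤ h(x) ≤ h_max for all x. For ζ, v : ℝ → ℝ four times continuously differentiable with compact support, define E² = ∫_ℝ ζ·(J[h]ζ) dx + ∫_ℝ v·(ℑv) dx, where (J[h]ζ)(x) = ζ − ε²·d/dx[h⁻¹ζ'] + (2/45)ε²·d²/dx²[h⁻¹ζ''] and (ℑv)(x) = h v − (ε/3)·d/dx[h³ v'] + (ε²/45)·v'''', and define X = ∫_ℝ ζ² dx + ε²∫_ℝ (ζ')² dx + ε²∫_ℝ (ζ'')² dx + ∫_ℝ v² dx + ε∫_ℝ (v')² dx + ε²∫_ℝ (v'')² dx. Then there exist constants c₁, c₂ > 0, depending only on h_min and h_max and not on ε, ζ, v, such that c₁·X ≤ E² ≤ c₂·X. -/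
open MeasureTheory

lemma ibp_aux {f g : ℝ → ℝ} (hf : ContDiff ℝ 1 f) (hg : ContDiff ℝ 1 g)
    (hs : HasCompactSupport f) :
    ∫ x, f x * deriv g x = - ∫ x, deriv f x * g x := by
  have hf' := hf.continuous_deriv le_rfl
  have hg' := hg.continuous_deriv le_rfl
  apply integral_mul_deriv_eq_deriv_mul_of_integrable
  · exact fun x _ => (hf.differentiable one_ne_zero x).hasDerivAt
  · exact fun x _ => (hg.differentiable one_ne_zero x).hasDerivAt
  · exact (hf.continuous.mul hg').integrable_of_hasCompactSupport hs.mul_right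
  · exact (hf'.mul hg.continuous).integrable_of_hasCompactSupport hs.deriv.mul_right
  · exact (hf.continuous.mul hg.continuous).integrable_of_hasCompactSupport hs.mul_right

lemma ibp2_aux {f g : ℝ → ℝ} (hf : ContDiff ℝ 2 f) (hg : ContDiff ℝ 2 g)
    (hs : HasCompactSupport f) :
    ∫ x, f x * deriv (deriv g) x = ∫ x, deriv (deriv f) x * g x := by
  have hf' : ContDiff ℝ 1 (deriv f) := hf.deriv' (n := 1)
  have hg' : ContDiff ℝ 1 (deriv g) := hg.deriv' (n := 1)
  rw [ibp_aux (hf.of_le one_le_two) hg' hs, ibp_aux hf' (hg.of_le one_le_two) hs.deriv, neg_neg]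

lemma weight_aux {f w : ℝ → ℝ} {a b : ℝ} (hf : Continuous f) (hs : HasCompactSupport f)
    (hw : Continuous w) (ha : ∀ x, a ≤ w x) (hb : ∀ x, w x ≤ b) :
    a * (∫ x, (f x) ^ 2) ≤ ∫ x, f x * (w x * f x) ∧
    (∫ x, f x * (w x * f x)) ≤ b * ∫ x, (f x) ^ 2 := by
  have i1 : Integrable (fun x => (f x) ^ 2) := by
    have : (fun x => (f x) ^ 2) = fun x => f x * f x := by ext x; ring
    rw [this]
    exact (hf.mul hf).integrable_of_hasCompactSupport hs.mul_right
  have i2 : Integrable (fun x => f x * (w x * f x)) :=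
    (hf.mul (hw.mul hf)).integrable_of_hasCompactSupport hs.mul_right
  rw [← integral_const_mul, ← integral_const_mul]
  constructor
  · refine integral_mono (i1.const_mul a) i2 fun x => ?_
    have := mul_le_mul_of_nonneg_right (ha x) (sq_nonneg (f x))
    simp only
    linarith
  · refine integral_mono i2 (i1.const_mul b) fun x => ?_
    have := mul_le_mul_of_nonneg_right (hb x) (sq_nonneg (f x))
    simp only
    linarith

lemma split_aux {f p q r : ℝ → ℝ} (a b : ℝ) (hf : Continuous f) (hs : HasCompactSupport f)
    (hp : Continuous p) (hq : Continuous q) (hr : Continuous r) :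
    ∫ x, f x * (p x - a * q x + b * r x) =
      (∫ x, f x * p x) - a * (∫ x, f x * q x) + b * ∫ x, f x * r x := by
  have ip : Integrable (fun x => f x * p x) :=
    (hf.mul hp).integrable_of_hasCompactSupport hs.mul_right
  have iq : Integrable (fun x => f x * q x) :=
    (hf.mul hq).integrable_of_hasCompactSupport hs.mul_right
  have ir : Integrable (fun x => f x * r x) :=
    (hf.mul hr).integrable_of_hasCompactSupport hs.mul_right
  rw [← integral_const_mul, ← integral_const_mul, ← integral_sub ip (iq.const_mul a),
    ← integral_add (show Integrable (fun x => f x * p x - a * (f x * q x)) volume from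
      ip.sub (iq.const_mul a)) (ir.const_mul b)]
  congr 1
  ext x
  ring

theorem energy_norm_equivalence (hmin hmax : ℝ) (hhmin : 0 < hmin) (hle : hmin ≤ hmax) :
    ∃ c₁ > (0:ℝ), ∃ c₂ > (0:ℝ),
      ∀ ε : ℝ, 0 < ε → ε ≤ 1 →
      ∀ h : ℝ → ℝ, ContDiff ℝ 2 h → (∀ x : ℝ, hmin ≤ h x) → (∀ x : ℝ, h x ≤ hmax) →
      ∀ ζ v : ℝ → ℝ, ContDiff ℝ 4 ζ → HasCompactSupport ζ →
        ContDiff ℝ 4 v → HasCompactSupport v →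
      let Jζ : ℝ → ℝ := fun x =>
        ζ x - ε ^ 2 * deriv (fun y => (h y)⁻¹ * deriv ζ y) x
          + 2 / 45 * ε ^ 2 * deriv (deriv (fun y => (h y)⁻¹ * deriv (deriv ζ) y)) x
      let Iv : ℝ → ℝ := fun x =>
        h x * v x - ε / 3 * deriv (fun y => (h y) ^ 3 * deriv v y) x
          + ε ^ 2 / 45 * deriv (deriv (deriv (deriv v))) x
      let E2 : ℝ := (∫ x : ℝ, ζ x * Jζ x) + ∫ x : ℝ, v x * Iv x
      let X : ℝ := (∫ x : ℝ, (ζ x) ^ 2) + ε ^ 2 * (∫ x : ℝ, (deriv ζ x) ^ 2)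
        + ε ^ 2 * (∫ x : ℝ, (deriv (deriv ζ) x) ^ 2) + (∫ x : ℝ, (v x) ^ 2)
        + ε * (∫ x : ℝ, (deriv v x) ^ 2) + ε ^ 2 * (∫ x : ℝ, (deriv (deriv v) x) ^ 2)
      c₁ * X ≤ E2 ∧ E2 ≤ c₂ * X := by
  have hhmax : 0 < hmax := hhmin.trans_le hle
  have hi : 0 < hmax⁻¹ := inv_pos.2 hhmax
  have hi' : 0 < hmin⁻¹ := inv_pos.2 hhmin
  have h3 : 0 < hmin ^ 3 := by positivity
  have h3' : 0 < hmax ^ 3 := by positivity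
  obtain ⟨c, hc, k1, k2, k3, k4, k5⟩ : ∃ c > (0:ℝ), c ≤ 1 ∧ c ≤ 2 / 45 * hmax⁻¹ ∧ c ≤ hmin ∧
      c ≤ hmin ^ 3 / 3 ∧ c ≤ 1 / 45 := by
    refine ⟨min 1 (min (2 / 45 * hmax⁻¹) (min hmin (min (hmin ^ 3 / 3) (1 / 45)))), ?_, ?_⟩
    · refine lt_min one_pos (lt_min (by positivity) (lt_min hhmin
        (lt_min (by positivity) (by norm_num))))
    · simp
  refine ⟨c, hc, 1 + hmin⁻¹ + hmax + hmax ^ 3, by positivity, ?_⟩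
  intro ε hε hε1 h hh hlo hhi ζ v hζ sζ hv sv Jζ Iv E2 X
  have hne : ∀ x, h x ≠ 0 := fun x => (hhmin.trans_le (hlo x)).ne'
  have hinv : ContDiff ℝ 2 (fun y => (h y)⁻¹) := hh.inv hne
  have hcub : ContDiff ℝ 2 (fun y => (h y) ^ 3) := hh.pow 3
  have z1 : ContDiff ℝ 3 (deriv ζ) := hζ.deriv' (n := 3)
  have z2 : ContDiff ℝ 2 (deriv (deriv ζ)) := z1.deriv' (n := 2)
  have v1 : ContDiff ℝ 3 (deriv v) := hv.deriv' (n := 3)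
  have v2 : ContDiff ℝ 2 (deriv (deriv v)) := v1.deriv' (n := 2)
  have a1 : ContDiff ℝ 1 (fun y => (h y)⁻¹ * deriv ζ y) :=
    (hinv.of_le one_le_two).mul (z1.of_le (by norm_num))
  have a2 : ContDiff ℝ 2 (fun y => (h y)⁻¹ * deriv (deriv ζ) y) := hinv.mul z2
  have a3 : ContDiff ℝ 1 (fun y => (h y) ^ 3 * deriv v y) :=
    (hcub.of_le one_le_two).mul (v1.of_le (by norm_num))
  have b2 : ContDiff ℝ 1 (deriv (fun y => (h y)⁻¹ * deriv (deriv ζ) y)) := a2.deriv' (n := 1)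
  have v3 : ContDiff ℝ 1 (deriv (deriv (deriv v))) := v2.deriv' (n := 1)
  have eJ : ∫ x, ζ x * Jζ x = _ := split_aux (ε ^ 2) (2 / 45 * ε ^ 2) hζ.continuous sζ
    hζ.continuous (a1.continuous_deriv le_rfl) (b2.continuous_deriv le_rfl)
  have eI : ∫ x, v x * Iv x = _ := split_aux (p := fun x => h x * v x) (ε / 3) (ε ^ 2 / 45)
    hv.continuous sv
    (hh.continuous.mul hv.continuous) (a3.continuous_deriv le_rfl) (v3.continuous_deriv le_rfl)
  rw [ibp_aux (hζ.of_le (by norm_num)) a1 sζ, ibp2_aux (hζ.of_le (by norm_num)) a2 sζ] at eJ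
  rw [ibp_aux (hv.of_le (by norm_num)) a3 sv, ibp2_aux (hv.of_le (by norm_num)) v2 sv] at eI
  have il : ∀ x, hmax⁻¹ ≤ (h x)⁻¹ := fun x => inv_anti₀ (hhmin.trans_le (hlo x)) (hhi x)
  have iu : ∀ x, (h x)⁻¹ ≤ hmin⁻¹ := fun x => inv_anti₀ hhmin (hlo x)
  have cl : ∀ x, hmin ^ 3 ≤ (h x) ^ 3 := fun x => pow_le_pow_left₀ hhmin.le (hlo x) 3
  have cu : ∀ x, (h x) ^ 3 ≤ hmax ^ 3 :=
    fun x => pow_le_pow_left₀ (hhmin.trans_le (hlo x)).le (hhi x) 3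
  obtain ⟨l1, u1⟩ := weight_aux z1.continuous sζ.deriv hinv.continuous il iu
  obtain ⟨l2, u2⟩ := weight_aux z2.continuous sζ.deriv.deriv hinv.continuous il iu
  obtain ⟨l3, u3⟩ := weight_aux hv.continuous sv hh.continuous hlo hhi
  obtain ⟨l4, u4⟩ := weight_aux v1.continuous sv.deriv hcub.continuous cl cu
  have e0 : ∫ x, ζ x * ζ x = ∫ x, (ζ x) ^ 2 := by simp only [sq]
  have e5 : ∫ x, deriv (deriv v) x * deriv (deriv v) x = ∫ x, (deriv (deriv v) x) ^ 2 := by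
    simp only [sq]
  rw [e0] at eJ
  rw [e5] at eI
  have n : ∀ f : ℝ → ℝ, 0 ≤ ∫ x, (f x) ^ 2 := fun f => integral_nonneg fun x => sq_nonneg _
  have n0 := n ζ
  have n1 := n (deriv ζ)
  have n2 := n (deriv (deriv ζ))
  have n3 := n v
  have n4 := n (deriv v)
  have n5 := n (deriv (deriv v))
  simp only [E2, X]
  rw [eJ, eI]
  clear eJ eI e0 e5 n Jζ Iv E2 X
  generalize (∫ x, (ζ x) ^ 2) = A0 at *
  generalize (∫ x, (deriv ζ x) ^ 2) = A1 at *
  generalize (∫ x, (deriv (deriv ζ) x) ^ 2) = A2 at *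
  generalize (∫ x, (v x) ^ 2) = A3 at *
  generalize (∫ x, (deriv v x) ^ 2) = A4 at *
  generalize (∫ x, (deriv (deriv v) x) ^ 2) = A5 at *
  generalize (∫ x, deriv ζ x * ((h x)⁻¹ * deriv ζ x)) = B1 at *
  generalize (∫ x, deriv (deriv ζ) x * ((h x)⁻¹ * deriv (deriv ζ) x)) = B2 at *
  generalize (∫ x, v x * (h x * v x)) = B3 at *
  generalize (∫ x, deriv v x * ((h x) ^ 3 * deriv v x)) = B4 at *
  have hε2 : 0 < ε ^ 2 := by positivity
  constructor
  · have q0 : c * A0 ≤ A0 := by linarith [mul_le_mul_of_nonneg_right k1 n0]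
    have q1 : c * A1 ≤ B1 := by linarith [mul_le_mul_of_nonneg_right (show c ≤ hmax⁻¹ by linarith) n1]
    have q2 : c * A2 ≤ 2 / 45 * B2 := by linarith [mul_le_mul_of_nonneg_right k2 n2]
    have q3 : c * A3 ≤ B3 := by linarith [mul_le_mul_of_nonneg_right k3 n3]
    have q4 : c * A4 ≤ B4 / 3 := by linarith [mul_le_mul_of_nonneg_right k4 n4]
    have q5 : c * A5 ≤ A5 / 45 := by linarith [mul_le_mul_of_nonneg_right k5 n5]
    have r1 := mul_le_mul_of_nonneg_left q1 hε2.le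
    have r2 := mul_le_mul_of_nonneg_left q2 hε2.le
    have r4 := mul_le_mul_of_nonneg_left q4 hε.le
    have r5 := mul_le_mul_of_nonneg_left q5 hε2.le
    linarith
  · set C := 1 + hmin⁻¹ + hmax + hmax ^ 3 with hC
    have C1 : 1 ≤ C := by linarith
    have C2 : hmin⁻¹ ≤ C := by linarith
    have C3 : hmax ≤ C := by linarith
    have C4 : hmax ^ 3 ≤ C := by linarith
    have q0 : A0 ≤ C * A0 := by linarith [mul_le_mul_of_nonneg_right C1 n0]
    have q1 : B1 ≤ C * A1 := u1.trans (mul_le_mul_of_nonneg_right C2 n1)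
    have q2' : B2 ≤ C * A2 := u2.trans (mul_le_mul_of_nonneg_right C2 n2)
    have q3 : B3 ≤ C * A3 := u3.trans (mul_le_mul_of_nonneg_right C3 n3)
    have q4' : B4 ≤ C * A4 := u4.trans (mul_le_mul_of_nonneg_right C4 n4)
    have p2 : 0 ≤ C * A2 := mul_nonneg (by linarith) n2
    have p4 : 0 ≤ C * A4 := mul_nonneg (by linarith) n4
    have q2 : 2 / 45 * B2 ≤ C * A2 := by linarith
    have q4 : B4 / 3 ≤ C * A4 := by linarith
    have q5 : A5 / 45 ≤ C * A5 := by linarith [mul_le_mul_of_nonneg_right C1 n5]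
    have r1 := mul_le_mul_of_nonneg_left q1 hε2.le
    have r2 := mul_le_mul_of_nonneg_left q2 hε2.le
    have r4 := mul_le_mul_of_nonneg_left q4 hε.le
    have r5 := mul_le_mul_of_nonneg_left q5 hε2.le
    linarith
end

section
/- Let 0 < ε ≤ 1, T > 0 and M > 0. Let ζ₁, v₁, ζ₂, v₂ : [0,T] × ℝ → ℝ be smooth functions such that: (i) ∂_t v₁ − (ε/3)∂_x²∂_t v₁ + ∂_x ζ₁ + ε v₁ ∂_x v₁ = 0 at every point; (ii) ∂_t v₂ + ∂_x ζ₂ = f at every point, where f = ∂_x ζ₁ · ∂_x∂_t v₁ + (2/3)·ζ₁·∂_x²∂_t v₁ + (1/45)·∂_x⁴∂_t v₁ + (1/3)·∂_x(v₁·∂_x²v₁ − (∂_x v₁)²); (iii) all partial derivatives in t and x of ζ₁, v₁, ζ₂, v₂ of total order ≤ 6 are bounded in absolute value by M on [0,T] × ℝ; (iv) 1 + ε·ζ(t,x) ≥ 1/2 on [0,T] × ℝ, where ζ = ζ₁ + ε²ζ₂ and v = v₁ + ε²v₂. Then there exists a constant C > 0, depending only on M (and not on ε or T), such that for all (t,x)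 ∈ [0,T] × ℝ: |∂_t v − (ε/(3(1+εζ)))·∂_x((1+3εζ)·∂_x∂_t v) − (ε²/45)·∂_x⁴∂_t v + ∂_x ζ + ε v ∂_x v − (ε²/3)·∂_x(v·∂_x²v − (∂_x v)²)| ≤ C·ε³. -/
open Function in
theorem px_eq {u : ℝ → ℝ → ℝ} (hu : ContDiff ℝ (⊤ : ℕ∞) (uncurry u)) :
    uncurry (px u) = fun p => fderiv ℝ (uncurry u) p ((0 : ℝ), (1 : ℝ)) := by
  ext ⟨t, x⟩
  have h1 : HasFDerivAt (uncurry u) (fderiv ℝ (uncurry u) (t, x)) (t, x) :=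
    ((hu.differentiable (by simp)) (t, x)).hasFDerivAt
  have h2 : HasDerivAt (fun y : ℝ => (t, y)) ((0 : ℝ), (1 : ℝ)) x :=
    (hasDerivAt_const x t).prodMk (hasDerivAt_id x)
  exact (h1.comp_hasDerivAt x h2).deriv

open Function in
theorem pt_eq {u : ℝ → ℝ → ℝ} (hu : ContDiff ℝ (⊤ : ℕ∞) (uncurry u)) :
    uncurry (pt u) = fun p => fderiv ℝ (uncurry u) p ((1 : ℝ), (0 : ℝ)) := by
  ext ⟨t, x⟩
  have h1 : HasFDerivAt (uncurry u) (fderiv ℝ (uncurry u) (t, x)) (t, x) :=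
    ((hu.differentiable (by simp)) (t, x)).hasFDerivAt
  have h2 : HasDerivAt (fun y : ℝ => (y, x)) ((1 : ℝ), (0 : ℝ)) t :=
    (hasDerivAt_id t).prodMk (hasDerivAt_const t x)
  exact (h1.comp_hasDerivAt t h2).deriv

/-- Smooth functions of two variables. -/
def Sm (u : ℝ → ℝ → ℝ) : Prop := ContDiff ℝ (⊤ : ℕ∞) (Function.uncurry u)

theorem smooth_dir {U : ℝ × ℝ → ℝ} (hU : ContDiff ℝ (⊤ : ℕ∞) U) (e : ℝ × ℝ) :
    ContDiff ℝ (⊤ : ℕ∞) (fun p => fderiv ℝ U p e) :=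
  (hU.fderiv_right (by simp)).clm_apply contDiff_const

theorem Sm.px {u : ℝ → ℝ → ℝ} (hu : Sm u) : Sm (px u) := by
  unfold Sm; rw [px_eq hu]; exact smooth_dir hu _

theorem Sm.pt {u : ℝ → ℝ → ℝ} (hu : Sm u) : Sm (pt u) := by
  unfold Sm; rw [pt_eq hu]; exact smooth_dir hu _

theorem Sm.dx {u : ℝ → ℝ → ℝ} (hu : Sm u) (t x : ℝ) :
    HasDerivAt (fun y => u t y) (_root_.px u t x) x := by
  have : Differentiable ℝ (fun y => u t y) :=
    (ContDiff.differentiable (n := (⊤ : ℕ∞)) (ContDiff.comp (g := Function.uncurry u) (f := fun y => (t, y)) hu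
      (contDiff_prodMk_right t)) (by simp))
  exact (this x).hasDerivAt

theorem Sm.dt {u : ℝ → ℝ → ℝ} (hu : Sm u) (t x : ℝ) :
    HasDerivAt (fun s => u s x) (_root_.pt u t x) t := by
  have : Differentiable ℝ (fun s => u s x) :=
    (ContDiff.differentiable (n := (⊤ : ℕ∞)) (ContDiff.comp (g := Function.uncurry u) (f := fun s => (s, x)) hu
      (contDiff_prodMk_left x)) (by simp))
  exact (this t).hasDerivAt

theorem px_lin {u w : ℝ → ℝ → ℝ} (hu : Sm u) (hw : Sm w) (c : ℝ) :
    px (fun t x => u t x + c * w t x) = fun t x => px u t x + c * px w t x := by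
  ext t x
  exact ((hu.dx t x).add ((hw.dx t x).const_mul c)).deriv

theorem pt_lin {u w : ℝ → ℝ → ℝ} (hu : Sm u) (hw : Sm w) (c : ℝ) :
    pt (fun t x => u t x + c * w t x) = fun t x => pt u t x + c * pt w t x := by
  ext t x
  exact ((hu.dt t x).add ((hw.dt t x).const_mul c)).deriv

theorem Sm.lin {u w : ℝ → ℝ → ℝ} (hu : Sm u) (hw : Sm w) (c : ℝ) :
    Sm (fun t x => u t x + c * w t x) :=
  ContDiff.add hu (contDiff_const.mul hw)

theorem px_Q {v : ℝ → ℝ → ℝ} (hv : Sm v) (t x : ℝ) :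
    px (fun t x => v t x * px (px v) t x - (px v t x) ^ 2) t x
      = v t x * px (px (px v)) t x - px v t x * px (px v) t x := by
  have := (((hv.dx t x).mul (hv.px.px.dx t x)).sub ((hv.px.dx t x).pow 2)).deriv
  refine Eq.trans this ?_
  push_cast
  ring

theorem px_T {z w : ℝ → ℝ → ℝ} (hz : Sm z) (hw : Sm w) (c t x : ℝ) :
    px (fun t x => (1 + c * z t x) * w t x) t x
      = c * px z t x * w t x + (1 + c * z t x) * px w t x :=
  ((((hz.dx t x).const_mul c).const_add 1).mul (hw.dx t x)).deriv

/-- All derivatives of order at most `N` are bounded by `M` at the point `(t, x)`. -/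
def Bd (M : ℝ) (N : ℕ) (u : ℝ → ℝ → ℝ) (t x : ℝ) : Prop :=
  ∀ n ≤ N, ‖iteratedFDeriv ℝ n (Function.uncurry u) (t, x)‖ ≤ M

theorem bound_dir {U : ℝ × ℝ → ℝ} (hU : ContDiff ℝ (⊤ : ℕ∞) U) (e : ℝ × ℝ) (he : ‖e‖ = 1)
    (n : ℕ) (p : ℝ × ℝ) :
    ‖iteratedFDeriv ℝ n (fun p => fderiv ℝ U p e) p‖ ≤ ‖iteratedFDeriv ℝ (n + 1) U p‖ := by
  have h := norm_iteratedFDeriv_clm_apply_const (𝕜 := ℝ) (f := fderiv ℝ U) (c := e) (x := p)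
    (N := (⊤ : ℕ∞)) (n := n) (hU.fderiv_right (by simp)).contDiffAt (by exact_mod_cast le_top)
  rwa [he, one_mul, norm_iteratedFDeriv_fderiv] at h

theorem Bd.px {M : ℝ} {N : ℕ} {u : ℝ → ℝ → ℝ} {t x : ℝ} (hu : Sm u) (h : Bd M (N + 1) u t x) :
    Bd M N (px u) t x := by
  intro n hn
  rw [px_eq hu]
  exact (bound_dir hu _ (by simp) n _).trans (h (n + 1) (by omega))

theorem Bd.pt {M : ℝ} {N : ℕ} {u : ℝ → ℝ → ℝ} {t x : ℝ} (hu : Sm u) (h : Bd M (N + 1) u t x) :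
    Bd M N (pt u) t x := by
  intro n hn
  rw [pt_eq hu]
  exact (bound_dir hu _ (by simp) n _).trans (h (n + 1) (by omega))

theorem Bd.val {M : ℝ} {N : ℕ} {u : ℝ → ℝ → ℝ} {t x : ℝ} (h : Bd M N u t x) : |u t x| ≤ M := by
  simpa using h 0 (Nat.zero_le _)

theorem bmul {x y A B : ℝ} (hx : |x| ≤ A) (hy : |y| ≤ B) : |x * y| ≤ A * B := by
  rw [abs_mul]; exact mul_le_mul hx hy (abs_nonneg _) ((abs_nonneg _).trans hx)

theorem badd {x y A B : ℝ} (hx : |x| ≤ A) (hy : |y| ≤ B) : |x + y| ≤ A + B :=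
  (abs_add_le _ _).trans (add_le_add hx hy)

theorem bsub {x y A B : ℝ} (hx : |x| ≤ A) (hy : |y| ≤ B) : |x - y| ≤ A + B :=
  (abs_sub _ _).trans (add_le_add hx hy)

/-- The product of two first-order perturbations: the remainder is bounded. -/
theorem bcross {M e a b c d : ℝ} (he : |e| ≤ 1) (ha : |a| ≤ M) (hb : |b| ≤ M) (hc : |c| ≤ M)
    (hd : |d| ≤ M) : |b * c + a * d + e ^ 2 * (b * d)| ≤ 3 * M ^ 2 := by
  have h2 : |e ^ 2| ≤ 1 := by rw [abs_pow]; exact pow_le_one₀ (abs_nonneg _) he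
  have := badd (badd (bmul hb hc) (bmul ha hd)) (bmul h2 (bmul hb hd))
  linarith

theorem bpert {M e a b : ℝ} (he : |e| ≤ 1) (ha : |a| ≤ M) (hb : |b| ≤ M) :
    |a + e ^ 2 * b| ≤ 2 * M := by
  have h2 : |e ^ 2| ≤ 1 := by rw [abs_pow]; exact pow_le_one₀ (abs_nonneg _) he
  have := badd ha (bmul h2 hb)
  linarith

theorem bfinal {q A B C D F G H qp Ap Bp Cp Dp Fp Gp Hp : ℝ} (hq : |q| ≤ qp) (hA : |A| ≤ Ap)
    (hB : |B| ≤ Bp) (hC : |C| ≤ Cp) (hD : |D| ≤ Dp) (hF : |F| ≤ Fp) (hG : |G| ≤ Gp)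
    (hH : |H| ≤ Hp) :
    |-(1 / 3) * q - 2 / 3 * A + 2 / 3 * B - C + D - 1 / 45 * F + G - 1 / 3 * H|
      ≤ 1 / 3 * qp + 2 / 3 * Ap + 2 / 3 * Bp + Cp + Dp + 1 / 45 * Fp + Gp + 1 / 3 * Hp := by
  rw [abs_le] at *
  constructor <;> linarith

/-- Pointwise algebraic form of the consistency estimate. -/
theorem alg {M e a ap b bp f f1 f2 f3 g g1 g2 g3 p p1 p2 p4 q q1 q2 q4 : ℝ} (hM : 0 < M)
    (he0 : 0 < e) (he1 : e ≤ 1) (ha : |a| ≤ M) (hap : |ap| ≤ M) (hb : |b| ≤ M) (hbp : |bp| ≤ M)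
    (hf : |f| ≤ M) (hf1 : |f1| ≤ M) (hf2 : |f2| ≤ M) (hf3 : |f3| ≤ M)
    (hg : |g| ≤ M) (hg1 : |g1| ≤ M) (hg2 : |g2| ≤ M) (hg3 : |g3| ≤ M)
    (hp1 : |p1| ≤ M) (hp2 : |p2| ≤ M)
    (hq1 : |q1| ≤ M) (hq2 : |q2| ≤ M) (hq4 : |q4| ≤ M)
    (E1 : p - e / 3 * p2 + ap + e * f * f1 = 0)
    (E2 : q + bp = ap * p1 + 2 / 3 * a * p2 + 1 / 45 * p4 + 1 / 3 * (f * f3 - f1 * f2))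
    (hh : 1 + e * (a + e ^ 2 * b) ≥ 1 / 2) :
    |(p + e ^ 2 * q) - e / (3 * (1 + e * (a + e ^ 2 * b)))
        * (3 * e * (ap + e ^ 2 * bp) * (p1 + e ^ 2 * q1)
          + (1 + 3 * e * (a + e ^ 2 * b)) * (p2 + e ^ 2 * q2))
      - e ^ 2 / 45 * (p4 + e ^ 2 * q4) + (ap + e ^ 2 * bp)
      + e * (f + e ^ 2 * g) * (f1 + e ^ 2 * g1)
      - e ^ 2 / 3 * ((f + e ^ 2 * g) * (f3 + e ^ 2 * g3) - (f1 + e ^ 2 * g1) * (f2 + e ^ 2 * g2))|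
      ≤ (2 * M + 20 * M ^ 2 + 60 * M ^ 3) * e ^ 3 := by
  have he : |e| ≤ 1 := by rw [abs_of_pos he0]; exact he1
  have hz := bpert he ha hb
  have hzp := bpert he hap hbp
  have hW1 := bpert he hp1 hq1
  have hW2 := bpert he hp2 hq2
  obtain ⟨k, hk⟩ : ∃ k, k = (1 + e * (a + e ^ 2 * b))⁻¹ := ⟨_, rfl⟩
  have hpos : 0 < 1 + e * (a + e ^ 2 * b) := by linarith
  have hk1 : k * (1 + e * (a + e ^ 2 * b)) = 1 := by rw [hk]; exact inv_mul_cancel₀ hpos.ne'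
  have hk2 : |k| ≤ 2 := by
    rw [hk, abs_of_pos (inv_pos.2 hpos), inv_le_comm₀ hpos (by norm_num)]
    linarith
  have hdiv : e / (3 * (1 + e * (a + e ^ 2 * b))) = e / 3 * k := by
    rw [hk]; field_simp
  rw [hdiv]
  have c1 := bcross he ha hb hp2 hq2
  have c2 := bcross he hap hbp hp1 hq1
  have c3 := bcross he hf hg hf1 hg1
  have c4 := bcross he hf hg hf3 hg3
  have c5 := bcross he hf1 hg1 hf2 hg2
  have d1 := bmul (bmul (bmul hz hz) hk2) hW2
  have d2 := bmul (bmul (bmul hz hzp) hk2) hW1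
  have e1 := bmul he c1
  have e2 := bmul he c2
  have e3 := bmul he hq4
  have e4 := bmul he (bsub c4 c5)
  have key : ∀ R S : ℝ, R = S * e ^ 3 → |S| ≤ (2 * M + 20 * M ^ 2 + 60 * M ^ 3) →
      |R| ≤ (2 * M + 20 * M ^ 2 + 60 * M ^ 3) * e ^ 3 := by
    intro R S h1 h2
    rw [h1, abs_mul, abs_of_pos (pow_pos he0 3)]
    exact mul_le_mul_of_nonneg_right h2 (pow_pos he0 3).le
  apply key _ (-(1 / 3) * q2 - 2 / 3 * (e * (b * p2 + a * q2 + e ^ 2 * (b * q2)))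
    + 2 / 3 * ((a + e ^ 2 * b) * (a + e ^ 2 * b) * k * (p2 + e ^ 2 * q2))
    - e * (bp * p1 + ap * q1 + e ^ 2 * (bp * q1))
    + (a + e ^ 2 * b) * (ap + e ^ 2 * bp) * k * (p1 + e ^ 2 * q1)
    - 1 / 45 * (e * q4)
    + (g * f1 + f * g1 + e ^ 2 * (g * g1))
    - 1 / 3 * (e * ((g * f3 + f * g3 + e ^ 2 * (g * g3))
      - (g1 * f2 + f1 * g2 + e ^ 2 * (g1 * g2)))))
  · have hz1 : k = 1 - e * (a + e ^ 2 * b) * k := by linarith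
    have hz2 : k = 1 - e * (a + e ^ 2 * b) + e ^ 2 * (a + e ^ 2 * b) ^ 2 * k := by
      linear_combination (1 - e * (a + e ^ 2 * b)) * hk1
    have s1 : (1 + 3 * e * (a + e ^ 2 * b)) * k
        = 1 + 2 * e * (a + e ^ 2 * b) - 2 * e ^ 2 * (a + e ^ 2 * b) ^ 2 * k := by
      linear_combination 3 * hk1 - 2 * hz2
    linear_combination E1 + e ^ 2 * E2 - e / 3 * (p2 + e ^ 2 * q2) * s1
      - e ^ 2 * (ap + e ^ 2 * bp) * (p1 + e ^ 2 * q1) * hz1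
  · have M2 := pow_pos hM 2
    have M3 := pow_pos hM 3
    refine (bfinal hq2 e1 d1 e2 d2 e3 c3 e4).trans ?_
    linarith only [hM, M2, M3]

theorem momentum_equation_consistency (M : ℝ) (hM : 0 < M) :
    ∃ C > (0:ℝ), ∀ ε T : ℝ, 0 < ε → ε ≤ 1 → 0 < T →
      ∀ ζ₁ v₁ ζ₂ v₂ : ℝ → ℝ → ℝ,
      ContDiff ℝ (⊤ : ℕ∞) (Function.uncurry ζ₁) → ContDiff ℝ (⊤ : ℕ∞) (Function.uncurry v₁) →
      ContDiff ℝ (⊤ : ℕ∞) (Function.uncurry ζ₂) → ContDiff ℝ (⊤ : ℕ∞) (Function.uncurry v₂) →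
      -- (i) standard Boussinesq momentum equation for (ζ₁, v₁)
      (∀ t ∈ Set.Icc (0:ℝ) T, ∀ x : ℝ,
        pt v₁ t x - ε / 3 * px (px (pt v₁)) t x + px ζ₁ t x
          + ε * v₁ t x * px v₁ t x = 0) →
      -- (ii) corrector equation ∂_t v₂ + ∂_x ζ₂ = f(ζ₁, v₁)
      (∀ t ∈ Set.Icc (0:ℝ) T, ∀ x : ℝ,
        pt v₂ t x + px ζ₂ t x
          = px ζ₁ t x * px (pt v₁) t x
            + 2 / 3 * ζ₁ t x * px (px (pt v₁)) t x
            + 1 / 45 * px (px (px (px (pt v₁)))) t x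
            + 1 / 3 * px (fun t x => v₁ t x * px (px v₁) t x - (px v₁ t x) ^ 2) t x) →
      -- (iii) all partial derivatives of total order ≤ 6 bounded by M
      (∀ n : ℕ, n ≤ 6 → ∀ t ∈ Set.Icc (0:ℝ) T, ∀ x : ℝ,
        ‖iteratedFDeriv ℝ n (Function.uncurry ζ₁) (t, x)‖ ≤ M ∧
        ‖iteratedFDeriv ℝ n (Function.uncurry v₁) (t, x)‖ ≤ M ∧
        ‖iteratedFDeriv ℝ n (Function.uncurry ζ₂) (t, x)‖ ≤ M ∧
        ‖iteratedFDeriv ℝ n (Function.uncurry v₂) (t, x)‖ ≤ M) →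
      let ζ : ℝ → ℝ → ℝ := fun t x => ζ₁ t x + ε ^ 2 * ζ₂ t x
      let v : ℝ → ℝ → ℝ := fun t x => v₁ t x + ε ^ 2 * v₂ t x
      -- (iv) nonvanishing depth
      (∀ t ∈ Set.Icc (0:ℝ) T, ∀ x : ℝ, 1 + ε * ζ t x ≥ 1 / 2) →
      ∀ t ∈ Set.Icc (0:ℝ) T, ∀ x : ℝ,
        |pt v t x
          - ε / (3 * (1 + ε * ζ t x))
              * px (fun t x => (1 + 3 * ε * ζ t x) * px (pt v) t x) t x
          - ε ^ 2 / 45 * px (px (px (px (pt v)))) t x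
          + px ζ t x + ε * v t x * px v t x
          - ε ^ 2 / 3 * px (fun t x => v t x * px (px v) t x - (px v t x) ^ 2) t x|
        ≤ C * ε ^ 3 := by
  refine ⟨2 * M + 20 * M ^ 2 + 60 * M ^ 3, by positivity, ?_⟩
  intro ε T he0 he1 _ ζ₁ v₁ ζ₂ v₂ hz1 hv1 hz2 hv2 E1 E2 hB ζ v hh t ht x
  have hz1 : Sm ζ₁ := hz1
  have hz2 : Sm ζ₂ := hz2
  have hv1 : Sm v₁ := hv1
  have hv2 : Sm v₂ := hv2
  have Bz1 : Bd M 6 ζ₁ t x := fun n hn => (hB n hn t ht x).1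
  have Bv1 : Bd M 6 v₁ t x := fun n hn => (hB n hn t ht x).2.1
  have Bz2 : Bd M 6 ζ₂ t x := fun n hn => (hB n hn t ht x).2.2.1
  have Bv2 : Bd M 6 v₂ t x := fun n hn => (hB n hn t ht x).2.2.2
  have hz : Sm ζ := hz1.lin hz2 _
  have hv : Sm v := hv1.lin hv2 _
  have E1 := E1 t ht x
  have E2 := E2 t ht x
  rw [px_Q hv1] at E2
  rw [px_Q hv, px_T hz hv.pt.px]
  have z1 : px ζ = _ := px_lin hz1 hz2 _
  have w1 : px v = _ := px_lin hv1 hv2 _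
  have w2 : px (px v) = _ :=
    (congrArg px w1).trans (px_lin hv1.px hv2.px _)
  have w3 : px (px (px v)) = _ :=
    (congrArg px w2).trans (px_lin hv1.px.px hv2.px.px _)
  have y0 : pt v = _ := pt_lin hv1 hv2 _
  have y1 : px (pt v) = _ :=
    (congrArg px y0).trans (px_lin hv1.pt hv2.pt _)
  have y2 : px (px (pt v)) = _ :=
    (congrArg px y1).trans (px_lin hv1.pt.px hv2.pt.px _)
  have y3 : px (px (px (pt v))) = _ :=
    (congrArg px y2).trans (px_lin hv1.pt.px.px hv2.pt.px.px _)
  have y4 : px (px (px (px (pt v)))) = _ :=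
    (congrArg px y3).trans (px_lin hv1.pt.px.px.px hv2.pt.px.px.px _)
  rw [y4, y2, y1, y0, w3, w2, w1, z1]
  have P1 := Bv1.px hv1
  have P2 := P1.px hv1.px
  have P3 := P2.px hv1.px.px
  have Q1 := Bv2.px hv2
  have Q2 := Q1.px hv2.px
  have Q3 := Q2.px hv2.px.px
  have R1 := (Bv1.pt hv1).px hv1.pt
  have R2 := R1.px hv1.pt.px
  have S1 := (Bv2.pt hv2).px hv2.pt
  have S2 := S1.px hv2.pt.px
  have S4 := (S2.px hv2.pt.px.px).px hv2.pt.px.px.px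
  exact alg hM he0 he1 Bz1.val (Bz1.px hz1).val Bz2.val (Bz2.px hz2).val Bv1.val P1.val P2.val
    P3.val Bv2.val Q1.val Q2.val Q3.val R1.val R2.val S1.val S2.val S4.val E1 E2 (hh t ht x)
end
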